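/- Let M, C_1, …, C_K, Z_1, …, Z_{k−1}, Z_k be finite discrete random variables with C = (C_1, …, C_K), and fix k ∈ {1, …, K}. If (Z_1, …, Z_{k−1}, C) → (C_k, M) → Z_k forms a Markov chain, then I(M; Z_k | Z_1, …, Z_{k−1}, C) ≤ I(M; Z_k | C_k). -/

import Mathlib

open scoped Classical

/-- Probability of an event under pmf `p` on a finite sample space. -/
noncomputable def pr {Ω : Type*} [Fintype Ω] (p : Ω → ℝ) (E : Ω → Prop) : ℝ :=
  ∑ ω, if E ω then p ω else 0

/-- Shannon entropy of a finite discrete random variable `X`. -/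
noncomputable def entropy {Ω α : Type*} [Fintype Ω] [Fintype α] (p : Ω → ℝ) (X : Ω → α) : ℝ :=
  -∑ x, pr p (fun ω => X ω = x) * Real.log (pr p (fun ω => X ω = x))

/-- Conditional entropy `H(X|Y) = H(X,Y) - H(Y)`. -/
noncomputable def condEntropy {Ω α β : Type*} [Fintype Ω] [Fintype α] [Fintype β]
    (p : Ω → ℝ) (X : Ω → α) (Y : Ω → β) : ℝ :=
  entropy p (fun ω => (X ω, Y ω)) - entropy p Y

/-- Mutual information `I(X;Y) = H(X) + H(Y) - H(X,Y)`. -/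
noncomputable def mutualInfo {Ω α β : Type*} [Fintype Ω] [Fintype α] [Fintype β]
    (p : Ω → ℝ) (X : Ω → α) (Y : Ω → β) : ℝ :=
  entropy p X + entropy p Y - entropy p (fun ω => (X ω, Y ω))

/-- Conditional mutual information `I(X;Y|Z) = H(X,Z) + H(Y,Z) - H(X,Y,Z) - H(Z)`. -/
noncomputable def condMutualInfo {Ω α β γ : Type*} [Fintype Ω] [Fintype α] [Fintype β] [Fintype γ]
    (p : Ω → ℝ) (X : Ω → α) (Y : Ω → β) (Z : Ω → γ) : ℝ :=
  entropy p (fun ω => (X ω, Z ω)) + entropy p (fun ω => (Y ω, Z ω))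
    - entropy p (fun ω => (X ω, Y ω, Z ω)) - entropy p Z

/-- `A → D → B` Markov chain: `A` and `B` are conditionally independent given `D`. -/
def CondIndep {Ω α β δ : Type*} [Fintype Ω]
    (p : Ω → ℝ) (A : Ω → α) (B : Ω → β) (D : Ω → δ) : Prop :=
  ∀ (a : α) (b : β) (d : δ),
    pr p (fun ω => A ω = a ∧ B ω = b ∧ D ω = d) * pr p (fun ω => D ω = d)
      = pr p (fun ω => A ω = a ∧ D ω = d) * pr p (fun ω => B ω = b ∧ D ω = d)

/-!
Expand `I(M, W; Y | D)` by the chain rule in both orders, where `W` is the finer and `D = f(W)` the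
coarser conditioning variable:
`I(W; Y | D) + I(M; Y | W, D) = I(M; Y | D) + I(W; Y | M, D)`.
The first summand on the left is nonnegative, the last one on the right vanishes by the Markov
property, and `(W, D)` carries the same information as `W`.
-/

lemma sum_mul_log_div_nonneg {ι : Type*} (s : Finset ι) {a b : ι → ℝ}
    (ha : ∀ i ∈ s, 0 ≤ a i) (hb : ∀ i ∈ s, 0 ≤ b i) (hab : ∀ i ∈ s, b i = 0 → a i = 0)
    (hsum : ∑ i ∈ s, b i ≤ ∑ i ∈ s, a i) :
    0 ≤ ∑ i ∈ s, a i * Real.log (a i / b i) := by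
  have pointwise : ∀ i ∈ s, a i - b i ≤ a i * Real.log (a i / b i) := by
    intro i hi
    rcases (ha i hi).eq_or_lt with ha0 | ha_pos
    · simpa [← ha0] using hb i hi
    · have hb_pos : 0 < b i := (hb i hi).lt_of_ne' fun hb0 => ha_pos.ne' (hab i hi hb0)
      calc a i - b i = a i * (1 - (a i / b i)⁻¹) := by field_simp
        _ ≤ a i * Real.log (a i / b i) := by
          gcongr
          exact Real.one_sub_inv_le_log_of_pos (div_pos ha_pos hb_pos)
  calc 0 ≤ ∑ i ∈ s, (a i - b i) := by rw [Finset.sum_sub_distrib]; exact sub_nonneg.2 hsum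
    _ ≤ ∑ i ∈ s, a i * Real.log (a i / b i) := Finset.sum_le_sum pointwise

section FiniteLaw

variable {Ω α β γ δ α' β' γ' : Type*} [Fintype Ω] {p : Ω → ℝ}

/-- The law of the random variable `X` under the weights `p`, given by its mass function. -/
noncomputable def law (p : Ω → ℝ) (X : Ω → α) (x : α) : ℝ :=
  pr p (fun ω => X ω = x)

lemma law_nonneg (hp : ∀ ω, 0 ≤ p ω) (X : Ω → α) (x : α) : 0 ≤ law p X x :=
  Finset.sum_nonneg fun ω _ => by split_ifs <;> simp [hp ω]

lemma law_le_law_comp (hp : ∀ ω, 0 ≤ p ω) (X : Ω → α) (f : α → β) (x : α) :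
    law p X x ≤ law p (fun ω => f (X ω)) (f x) := by
  refine Finset.sum_le_sum fun ω _ => ?_
  by_cases hX : X ω = x
  · simp [hX]
  · rw [if_neg hX]
    split_ifs <;> simp [hp ω]

lemma law_comp_of_injective (p : Ω → ℝ) (X : Ω → α) {f : α → β} (hf : f.Injective) (x : α) :
    law p (fun ω => f (X ω)) (f x) = law p X x := by
  simp only [law, hf.eq_iff]

lemma sum_law_mul [Fintype α] (p : Ω → ℝ) (X : Ω → α) (g : α → ℝ) :
    ∑ x, law p X x * g x = ∑ ω, p ω * g (X ω) := by
  simp only [law, pr, Finset.sum_mul, ite_mul, zero_mul]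
  rw [Finset.sum_comm]
  simp

lemma sum_law_prodMk [Fintype α] (p : Ω → ℝ) (X : Ω → α) (Y : Ω → β) (y : β) :
    ∑ x, law p (fun ω => (X ω, Y ω)) (x, y) = law p Y y := by
  simp only [law, pr, Prod.mk.injEq, ite_and]
  rw [Finset.sum_comm]
  simp

lemma entropy_comp [Fintype α] [Fintype β] (p : Ω → ℝ) (X : Ω → α) (f : α → β) :
    entropy p (fun ω => f (X ω)) =
      -∑ x, law p X x * Real.log (law p (fun ω => f (X ω)) (f x)) := by
  rw [sum_law_mul, ← sum_law_mul p _ fun y => Real.log (law p (fun ω => f (X ω)) y)]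
  rfl

lemma entropy_comp_of_injective [Fintype α] [Fintype β] (p : Ω → ℝ) (X : Ω → α) {f : α → β}
    (hf : f.Injective) : entropy p (fun ω => f (X ω)) = entropy p X := by
  simp only [entropy_comp, law_comp_of_injective p X hf]
  rfl

variable [Fintype α] [Fintype β] [Fintype γ]

lemma condMutualInfo_comp_of_injective [Fintype α'] [Fintype β'] [Fintype γ']
    (p : Ω → ℝ) (X : Ω → α) (Y : Ω → β) (Z : Ω → γ) {f : α → α'} {g : β → β'} {h : γ → γ'}
    (hf : f.Injective) (hg : g.Injective) (hh : h.Injective) :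
    condMutualInfo p (fun ω => f (X ω)) (fun ω => g (Y ω)) (fun ω => h (Z ω)) =
      condMutualInfo p X Y Z := by
  unfold condMutualInfo
  congr! 2
  · congr! 1
    · exact entropy_comp_of_injective p (fun ω => (X ω, Z ω)) (hf.prodMap hh)
    · exact entropy_comp_of_injective p (fun ω => (Y ω, Z ω)) (hg.prodMap hh)
  · exact entropy_comp_of_injective p (fun ω => (X ω, Y ω, Z ω)) (hf.prodMap (hg.prodMap hh))
  · exact entropy_comp_of_injective p Z hh

lemma condMutualInfo_chain_rule [Fintype δ] (p : Ω → ℝ) (X : Ω → α) (W : Ω → δ) (Y : Ω → β)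
    (Z : Ω → γ) :
    condMutualInfo p (fun ω => (X ω, W ω)) Y Z =
      condMutualInfo p W Y Z + condMutualInfo p X Y (fun ω => (W ω, Z ω)) := by
  have entropy_XWZ :
      entropy p (fun ω => (X ω, W ω, Z ω)) = entropy p (fun ω => ((X ω, W ω), Z ω)) :=
    entropy_comp_of_injective p (fun ω => ((X ω, W ω), Z ω)) (Equiv.prodAssoc α δ γ).injective
  have entropy_YWZ : entropy p (fun ω => (Y ω, W ω, Z ω)) = entropy p (fun ω => (W ω, Y ω, Z ω)) :=
    entropy_comp_of_injective p (fun ω => (W ω, Y ω, Z ω))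
      (f := fun t => (t.2.1, t.1, t.2.2)) (by grind [Function.Injective])
  have entropy_XYWZ :
      entropy p (fun ω => (X ω, Y ω, W ω, Z ω)) = entropy p (fun ω => ((X ω, W ω), Y ω, Z ω)) :=
    entropy_comp_of_injective p (fun ω => ((X ω, W ω), Y ω, Z ω))
      (f := fun t => (t.1.1, t.2.1, t.1.2, t.2.2)) (by grind [Function.Injective])
  unfold condMutualInfo
  linarith

lemma condMutualInfo_eq_sum (hp : ∀ ω, 0 ≤ p ω) (X : Ω → α) (Y : Ω → β) (Z : Ω → γ) :
    condMutualInfo p X Y Z =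
      ∑ t : α × β × γ, law p (fun ω => (X ω, Y ω, Z ω)) t *
        Real.log (law p (fun ω => (X ω, Y ω, Z ω)) t /
          (law p (fun ω => (X ω, Z ω)) (t.1, t.2.2) * law p (fun ω => (Y ω, Z ω)) t.2 /
            law p Z t.2.2)) := by
  let T : Ω → α × β × γ := fun ω => (X ω, Y ω, Z ω)
  have entropy_XZ := entropy_comp p T fun t => (t.1, t.2.2)
  have entropy_YZ := entropy_comp p T fun t => t.2
  have entropy_Z := entropy_comp p T fun t => t.2.2
  have entropy_T := entropy_comp p T id
  dsimp only [T, id] at entropy_XZ entropy_YZ entropy_Z entropy_T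
  rw [condMutualInfo, entropy_XZ, entropy_YZ, entropy_Z, entropy_T, ← sub_eq_zero]
  simp only [← Finset.sum_neg_distrib, ← Finset.sum_add_distrib, ← Finset.sum_sub_distrib]
  refine Finset.sum_eq_zero fun t _ => ?_
  rcases (law_nonneg hp T t).eq_or_lt with law_zero | law_pos
  · simp [T, ← law_zero]
  · have law_XZ_pos := law_pos.trans_le (law_le_law_comp hp T (fun t => (t.1, t.2.2)) t)
    have law_YZ_pos := law_pos.trans_le (law_le_law_comp hp T (fun t => t.2) t)
    have law_Z_pos := law_pos.trans_le (law_le_law_comp hp T (fun t => t.2.2) t)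
    rw [Real.log_div law_pos.ne' (by positivity), Real.log_div (by positivity) law_Z_pos.ne',
      Real.log_mul law_XZ_pos.ne' law_YZ_pos.ne']
    ring

lemma sum_law_mul_law_div_law (p : Ω → ℝ) (X : Ω → α) (Y : Ω → β) (Z : Ω → γ) :
    ∑ t : α × β × γ, law p (fun ω => (X ω, Z ω)) (t.1, t.2.2) *
        law p (fun ω => (Y ω, Z ω)) t.2 / law p Z t.2.2 =
      ∑ t, law p (fun ω => (X ω, Y ω, Z ω)) t := by
  simp only [Fintype.sum_prod_type_right, sum_law_prodMk, ← Finset.sum_div, ← Finset.sum_mul,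
    ← Finset.mul_sum, mul_self_div_self]

lemma condMutualInfo_nonneg (hp : ∀ ω, 0 ≤ p ω) (X : Ω → α) (Y : Ω → β) (Z : Ω → γ) :
    0 ≤ condMutualInfo p X Y Z := by
  rw [condMutualInfo_eq_sum hp]
  refine sum_mul_log_div_nonneg _ (fun t _ => law_nonneg hp _ t)
    (fun t _ => div_nonneg (mul_nonneg (law_nonneg hp _ _) (law_nonneg hp _ _))
      (law_nonneg hp _ _)) (fun t _ hzero => ?_) (sum_law_mul_law_div_law p X Y Z).le
  let T : Ω → α × β × γ := fun ω => (X ω, Y ω, Z ω)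
  refine le_antisymm ?_ (law_nonneg hp _ t)
  rcases div_eq_zero_iff.1 hzero with hmul | law_Z
  · rcases mul_eq_zero.1 hmul with law_XZ | law_YZ
    · exact (law_le_law_comp hp T (fun t => (t.1, t.2.2)) t).trans_eq law_XZ
    · exact (law_le_law_comp hp T (fun t => t.2) t).trans_eq law_YZ
  · exact (law_le_law_comp hp T (fun t => t.2.2) t).trans_eq law_Z

lemma CondIndep.condMutualInfo_eq_zero (hp : ∀ ω, 0 ≤ p ω) {X : Ω → α} {Y : Ω → β} {Z : Ω → γ}
    (h : CondIndep p X Y Z) : condMutualInfo p X Y Z = 0 := by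
  rw [condMutualInfo_eq_sum hp]
  refine Finset.sum_eq_zero fun ⟨x, y, z⟩ _ => ?_
  have factorization : law p (fun ω => (X ω, Y ω, Z ω)) (x, y, z) * law p Z z =
      law p (fun ω => (X ω, Z ω)) (x, z) * law p (fun ω => (Y ω, Z ω)) (y, z) := by
    simpa only [law, Prod.mk.injEq] using h x y z
  dsimp only
  rw [← factorization]
  by_cases law_Z : law p Z z = 0
  · simp [law_Z]
  · rw [mul_div_cancel_right₀ _ law_Z, Real.log_div_self, mul_zero]

theorem CondIndep.condMutualInfo_le [Fintype δ] (hp : ∀ ω, 0 ≤ p ω)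
    {M : Ω → α} {Y : Ω → β} {W : Ω → δ} {D : Ω → γ}
    (hMarkov : CondIndep p W Y (fun ω => (D ω, M ω))) :
    condMutualInfo p M Y (fun ω => (W ω, D ω)) ≤ condMutualInfo p M Y D := by
  have markov_zero : condMutualInfo p W Y (fun ω => (M ω, D ω)) = 0 :=
    (condMutualInfo_comp_of_injective p W Y (fun ω => (D ω, M ω)) Function.injective_id
      Function.injective_id Prod.swap_injective).trans (hMarkov.condMutualInfo_eq_zero hp)
  calc condMutualInfo p M Y (fun ω => (W ω, D ω))
      ≤ condMutualInfo p W Y D + condMutualInfo p M Y (fun ω => (W ω, D ω)) :=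
        le_add_of_nonneg_left (condMutualInfo_nonneg hp W Y D)
    _ = condMutualInfo p (fun ω => (M ω, W ω)) Y D := (condMutualInfo_chain_rule p M W Y D).symm
    _ = condMutualInfo p (fun ω => (W ω, M ω)) Y D :=
        condMutualInfo_comp_of_injective p (fun ω => (W ω, M ω)) Y D (f := Prod.swap) (g := id)
          (h := id) Prod.swap_injective Function.injective_id Function.injective_id
    _ = condMutualInfo p M Y D + condMutualInfo p W Y (fun ω => (M ω, D ω)) :=
        condMutualInfo_chain_rule p W M Y D
    _ = condMutualInfo p M Y D := by rw [markov_zero, add_zero]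

theorem per_term_leakage_bound_general [Fintype δ] (hp : ∀ ω, 0 ≤ p ω)
    (M : Ω → α) (Y : Ω → β) (W : Ω → δ) (f : δ → γ)
    (hMarkov : CondIndep p W Y (fun ω => (f (W ω), M ω))) :
    condMutualInfo p M Y W ≤ condMutualInfo p M Y (fun ω => f (W ω)) := by
  have graph_injective : (fun w => (w, f w)).Injective := fun _ _ h => congrArg Prod.fst h
  calc condMutualInfo p M Y W
      = condMutualInfo p M Y (fun ω => (W ω, f (W ω))) :=
        (condMutualInfo_comp_of_injective p M Y W Function.injective_id Function.injective_id
          graph_injective).symm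
    _ ≤ condMutualInfo p M Y (fun ω => f (W ω)) := hMarkov.condMutualInfo_le hp

end FiniteLaw

/-- for a fixed frame `k`, if `(Z₁,…,Z_{k-1}, C) → (C_k, M) → Z_k` is a
Markov chain then `I(M; Z_k | Z₁,…,Z_{k-1}, C) ≤ I(M; Z_k | C_k)`. -/
theorem per_term_leakage_bound
    {Ω 𝕄 γ ζ : Type*} [Fintype Ω] [Fintype 𝕄] [Fintype γ] [Fintype ζ]
    (p : Ω → ℝ) (hp : ∀ ω, 0 ≤ p ω) (hp1 : ∑ ω, p ω = 1)
    (K : ℕ) (hK : 1 ≤ K)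
    (M : Ω → 𝕄) (C : Fin K → Ω → γ) (Z : Fin K → Ω → ζ)
    (k : Fin K)
    (hMarkov :
      CondIndep p
        (fun ω => ((fun i : Fin (k : ℕ) => Z ⟨i, lt_trans i.isLt k.isLt⟩ ω),
                   (fun i : Fin K => C i ω)))
        (Z k)
        (fun ω => (C k ω, M ω))) :
    condMutualInfo p M (Z k)
        (fun ω => ((fun i : Fin (k : ℕ) => Z ⟨i, lt_trans i.isLt k.isLt⟩ ω),
                   (fun i : Fin K => C i ω)))
      ≤ condMutualInfo p M (Z k) (C k) :=
  per_term_leakage_bound_general hp M (Z k) _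
    (fun w : (Fin (k : ℕ) → ζ) × (Fin K → γ) => w.2 k) hMarkov
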